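/- Let X be a set, H any hypothesis class on X, and U a perturbation function on X. For a labeled sample S define A(S) = {z ∈ X : U⁻¹(z) ⊆ Agree(H_0(S)) and h(x) = h(z) for every x ∈ U⁻¹(z) and every h ∈ H_0(S)}. With respect to U and the stability loss ℓ_ST: (a) there exists a robustly-reliable learner L such that for every target h* ∈ H and every labeled sample S labeled by h*, RR^L(S) ⊇ A(S); and (b) for every robustly-reliable learner L and every labeled sample S, RR^L(S) ⊆ A(S). -/

import Mathlib

/-!
Given a sample, every hypothesis in the version space may be the target. Hence robust reliability
for the stability loss means that, wherever the learner answers, its prediction at `z` is the value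
of all version-space hypotheses on all of `U⁻¹(z)`. Since `z ∈ U⁻¹(z)`, such a common value exists
precisely when `z ∈ A(S)`, so the optimal learner answers exactly on `A(S)` and predicts that value.
-/

/-- `S` is labeled by `h` : every labeled pair in `S` carries the label `h` assigns. -/
def labeledBy {X : Type*} (S : List (X × Bool)) (h : X → Bool) : Prop :=
  ∀ p ∈ S, p.2 = h p.1

/-- Version space: hypotheses in `H` consistent with the sample `S`. -/
def versionSpace {X : Type*} (H : Set (X → Bool)) (S : List (X × Bool)) : Set (X → Bool) :=
  {h ∈ H | ∀ p ∈ S, h p.1 = p.2}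

/-- Agreement region of a set of hypotheses. -/
def agree {X : Type*} (G : Set (X → Bool)) : Set X :=
  {x | ∀ h₁ ∈ G, ∀ h₂ ∈ G, h₁ x = h₂ x}

/-- Stability loss `ℓ_ST^{h*}(h,x,z)`. -/
def lossST {X : Type*} (hs h : X → Bool) (x z : X) : ℕ :=
  if h z ≠ hs x then 1 else 0

/-- `U⁻¹(z) = {x : z ∈ U x}`. -/
def Uinv {X : Type*} (U : X → Set X) (z : X) : Set X := {x | z ∈ U x}

/-- A learner (`hyp`, `abst`) is robustly reliable w.r.t. a perturbation function `U`
and loss `ℓ`. -/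
def RobustlyReliableU {X : Type*} (H : Set (X → Bool)) (U : X → Set X)
    (ℓ : (X → Bool) → (X → Bool) → X → X → ℕ)
    (hyp : List (X × Bool) → X → Bool) (abst : List (X × Bool) → X → Bool) : Prop :=
  ∀ hs ∈ H, ∀ S : List (X × Bool), labeledBy S hs →
    ∀ x z : X, abst S z = true → z ∈ U x → ℓ hs (hyp S) x z = 0

/-- The robustly-reliable region: points where the learner does not abstain. -/
def RRregionU {X : Type*} (abst : List (X × Bool) → X → Bool) (S : List (X × Bool)) : Set X :=
  {z | abst S z = true}

/-- The set `A(S)`: points `z` with `U⁻¹(z)` inside the agreement region of the version space,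
on which every version-space hypothesis is constant. -/
def ASetU {X : Type*} (H : Set (X → Bool)) (U : X → Set X) (S : List (X × Bool)) : Set X :=
  {z | Uinv U z ⊆ agree (versionSpace H S) ∧
    ∀ x ∈ Uinv U z, ∀ h ∈ versionSpace H S, h x = h z}

/-- The label `y` is forced at `z` by the sample `S`: every hypothesis that may still be the target
takes the value `y` at every point of which `z` may be a perturbation. A prediction at `z` that is
certain to have zero stability loss is exactly a forced label. -/
def IsForcedLabel {X : Type*} (H : Set (X → Bool)) (U : X → Set X) (S : List (X × Bool))
    (z : X) (y : Bool) : Prop :=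
  ∀ h ∈ versionSpace H S, ∀ x ∈ Uinv U z, h x = y

section

variable {X : Type*} {H : Set (X → Bool)} {U : X → Set X} {S : List (X × Bool)} {z : X}

theorem mem_versionSpace_iff {h : X → Bool} :
    h ∈ versionSpace H S ↔ h ∈ H ∧ labeledBy S h :=
  and_congr_right fun _ => forall₂_congr fun _ _ => eq_comm

theorem lossST_eq_zero_iff {hs h : X → Bool} {x : X} : lossST hs h x z = 0 ↔ hs x = h z := by
  simp [lossST, eq_comm]

theorem robustlyReliableU_lossST_iff {hyp abst : List (X × Bool) → X → Bool} :
    RobustlyReliableU H U lossST hyp abst ↔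
      ∀ S, ∀ z ∈ RRregionU abst S, IsForcedLabel H U S z (hyp S z) := by
  constructor
  · intro hL S z hz h hh x hx
    obtain ⟨hH, hS⟩ := mem_versionSpace_iff.mp hh
    exact lossST_eq_zero_iff.mp (hL h hH S hS x z hz hx)
  · intro hL hs hH S hS x z hz hx
    exact lossST_eq_zero_iff.mpr (hL S z hz hs (mem_versionSpace_iff.mpr ⟨hH, hS⟩) x hx)

theorem exists_isForcedLabel_of_mem_ASetU (hz : z ∈ ASetU H U S) :
    ∃ y, IsForcedLabel H U S z y := by
  obtain ⟨hagree, hconst⟩ := hz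
  rcases (versionSpace H S).eq_empty_or_nonempty with hempty | ⟨h₀, hh₀⟩
  · exact ⟨true, by simp [IsForcedLabel, hempty]⟩
  · refine ⟨h₀ z, fun h hh x hx => ?_⟩
    calc
      h x = h₀ x := hagree hx h hh h₀ hh₀
      _ = h₀ z := hconst x hx h₀ hh₀

theorem IsForcedLabel.mem_ASetU {y : Bool} (hy : IsForcedLabel H U S z y) (hz : z ∈ U z) :
    z ∈ ASetU H U S :=
  ⟨fun x hx h₁ hh₁ h₂ hh₂ => (hy h₁ hh₁ x hx).trans (hy h₂ hh₂ x hx).symm,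
    fun x hx h hh => (hy h hh x hx).trans (hy h hh z hz).symm⟩

theorem RobustlyReliableU.RRregionU_subset_ASetU {hyp abst : List (X × Bool) → X → Bool}
    (hL : RobustlyReliableU H U lossST hyp abst) (hU : ∀ x, x ∈ U x) (S : List (X × Bool)) :
    RRregionU abst S ⊆ ASetU H U S :=
  fun z hz => (robustlyReliableU_lossST_iff.mp hL S z hz).mem_ASetU (hU z)

variable (H U) in
theorem exists_robustlyReliableU_lossST_RRregionU_eq_ASetU :
    ∃ hyp abst : List (X × Bool) → X → Bool,
      RobustlyReliableU H U lossST hyp abst ∧ ∀ S, RRregionU abst S = ASetU H U S := by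
  classical
  have hforced : ∀ S, ∀ z ∈ ASetU H U S, ∃ y, IsForcedLabel H U S z y :=
    fun _ _ => exists_isForcedLabel_of_mem_ASetU
  choose! hyp hhyp using hforced
  have hregion : ∀ S, RRregionU (fun S z => decide (z ∈ ASetU H U S)) S = ASetU H U S := by
    simp [RRregionU]
  refine ⟨hyp, _, robustlyReliableU_lossST_iff.mpr fun S z hz => ?_, hregion⟩
  exact hhyp S z ((hregion S).subset hz)

end

/-- Theorem 3.6(c) (for `ℓ_ST`): for any perturbation function `U` (with `x ∈ U x`),
(a) there is a robustly-reliable learner w.r.t. `U` and `ℓ_ST` whose robustly-reliable region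
contains `A(S)`, for every target `h* ∈ H` and every sample labeled by it; (b) for every
robustly-reliable learner and every sample, the robustly-reliable region is contained in `A(S)`. -/
theorem rr_region_eq_ASet_U_ST {X : Type*} (H : Set (X → Bool)) (U : X → Set X)
    (hU : ∀ x, x ∈ U x) :
    (∃ (hyp : List (X × Bool) → X → Bool) (abst : List (X × Bool) → X → Bool),
      RobustlyReliableU H U lossST hyp abst ∧
      ∀ hs ∈ H, ∀ S : List (X × Bool), labeledBy S hs →
        ASetU H U S ⊆ RRregionU abst S) ∧
    (∀ (hyp : List (X × Bool) → X → Bool) (abst : List (X × Bool) → X → Bool),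
      RobustlyReliableU H U lossST hyp abst →
      ∀ S : List (X × Bool), RRregionU abst S ⊆ ASetU H U S) := by
  refine ⟨?_, fun _ _ hL => hL.RRregionU_subset_ASetU hU⟩
  obtain ⟨hyp, abst, hL, hregion⟩ := exists_robustlyReliableU_lossST_RRregionU_eq_ASetU H U
  exact ⟨hyp, abst, hL, fun _ _ S _ => (hregion S).superset⟩
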